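/- If H is an amenable subgroup of a discrete group G, then there exists a state φ on C*_λ(G) such that φ(λ_g) = 1 for every g ∈ H and φ(λ_g) = 0 for every g ∈ G ∖ H. -/

import Mathlib

/-!
Averaging the `H`-orbit of the point mass at `1` against an invariant mean and separating by
Hahn–Banach (Day's convexity argument) gives probability densities on `G`, supported on `H`, that
are almost invariant in `ℓ¹` under any given finite subset of `H` (Reiter's condition). Their
square roots are unit vectors `ξ ∈ ℓ²(G)`, still almost fixed because `(√a - √b)² ≤ |a - b|`. The
coefficient `⟪ξ, λ_g ξ⟫` is then close to `1` for finitely many `g ∈ H`, and is exactly `0` for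
every `g ∉ H` since `ξ` and `λ_g ξ` have disjoint supports. By weak-* compactness of the states,
the functions `g ↦ φ(λ_g)` form a pointwise closed set, which therefore contains the indicator
of `H`.
-/

noncomputable section
open scoped ENNReal ComplexOrder lp
open MeasureTheory
set_option maxHeartbeats 1000000
set_option synthInstance.maxHeartbeats 1000000

universe u

variable {G : Type u} [Group G]

theorem translat_mem (g : G) (f : ℓ²(G, ℂ)) : Memℓp (fun h => f (g⁻¹ * h)) 2 := by
  have hf : Summable fun i : G => ‖f i‖ ^ (2 : ℝ≥0∞).toReal :=
    (memℓp_gen_iff (by norm_num)).1 (lp.memℓp f)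
  exact memℓp_gen ((Equiv.mulLeft g⁻¹).summable_iff.2 hf)

/-- The left regular representation of `g ∈ G` as a linear isometric bijection of `ℓ²(G)`,
given by `(λ_g ξ)(h) = ξ(g⁻¹ h)`. -/
def lregE (g : G) : ℓ²(G, ℂ) ≃ₗᵢ[ℂ] ℓ²(G, ℂ) :=
{ toFun := fun f => ⟨fun h => f (g⁻¹ * h), translat_mem g f⟩
  invFun := fun f => ⟨fun h => f (g * h), by
    have := translat_mem g⁻¹ f; simp only [inv_inv] at this; exact this⟩
  map_add' := by intro f₁ f₂; ext h; simp [lp.coeFn_add]; rfl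
  map_smul' := by intro c f; ext h; simp [lp.coeFn_smul]
  left_inv := by intro f; ext h; simp
  right_inv := by intro f; ext h; simp
  norm_map' := by
    intro f
    rw [lp.norm_eq_tsum_rpow (by norm_num) f, lp.norm_eq_tsum_rpow (by norm_num)]
    congr 1
    exact (Equiv.mulLeft g⁻¹).tsum_eq (fun h => ‖f h‖ ^ (2 : ℝ≥0∞).toReal) }

/-- The left regular representation `λ` as bounded operators on `ℓ²(G)`. -/
def lreg (g : G) : ℓ²(G, ℂ) →L[ℂ] ℓ²(G, ℂ) :=
  (lregE g).toContinuousLinearEquiv.toContinuousLinearMap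

variable (G) in
/-- The reduced group C*-algebra `C*_λ(G)`: the norm-closed star subalgebra of the algebra of
bounded operators on `ℓ²(G)` generated by the image of the left regular representation. -/
def redCstar : StarSubalgebra ℂ (ℓ²(G, ℂ) →L[ℂ] ℓ²(G, ℂ)) :=
  (StarAlgebra.adjoin ℂ (Set.range (lreg (G := G)))).topologicalClosure

/-- `λ_g` as an element of the reduced group C*-algebra. -/
def uu (g : G) : redCstar G :=
  ⟨lreg g, StarSubalgebra.le_topologicalClosure _ (StarAlgebra.subset_adjoin ℂ _ ⟨g, rfl⟩)⟩

attribute [irreducible] redCstar lreg lregE uu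

/-- A state on `C*_λ(G)`: a unital positive (continuous) linear functional. -/
def IsState (φ : WeakDual ℂ (redCstar G)) : Prop :=
  φ 1 = 1 ∧ ∀ a : redCstar G, 0 ≤ φ (star a * a)

/-- Left translation of a bounded function on a group `H`. -/
def translInfty {H : Type*} [Group H] (h : H) (f : lp (fun _ : H => ℝ) ∞) :
    lp (fun _ : H => ℝ) ∞ :=
  ⟨fun k => f (h⁻¹ * k), by
    apply memℓp_infty
    have : (Set.range fun k => ‖f (h⁻¹ * k)‖) = Set.range fun k => ‖f k‖ :=
      (Equiv.mulLeft h⁻¹).surjective.range_comp (fun k => ‖f k‖)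
    rw [this]
    exact memℓp_infty_iff.1 (lp.memℓp f)⟩

/-- A group `H` is amenable: there exists a left-invariant mean on `ℓ∞(H)`, i.e. a unital
positive linear functional invariant under left translation. -/
def IsAmenable (H : Type*) [Group H] : Prop :=
  ∃ m : lp (fun _ : H => ℝ) ∞ →ₗ[ℝ] ℝ,
    m 1 = 1 ∧ (∀ f : lp (fun _ : H => ℝ) ∞, (∀ k, 0 ≤ f k) → 0 ≤ m f) ∧
      ∀ (h : H) (f : lp (fun _ : H => ℝ) ∞), m (translInfty h f) = m f

section AlmostFixedPoints

open ContinuousLinearMap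

variable {α K E F : Type*} [Group K] [NormedAddCommGroup E] [NormedSpace ℝ E]
  [NormedAddCommGroup F] [NormedSpace ℝ F]

/-- The operator `f ↦ L ∘ f` on bounded functions induced by a continuous linear map `L`. -/
def boundedComp (L : E →L[ℝ] F) : lp (fun _ : α => E) ∞ →L[ℝ] lp (fun _ : α => F) ∞ :=
  lp.mapCLM ∞ (fun _ => L) (norm_nonneg L) fun _ => le_rfl

@[simp]
theorem boundedComp_apply (L : E →L[ℝ] F) (f : lp (fun _ : α => E) ∞) (a : α) :
    boundedComp L f a = L (f a) := by
  simp [boundedComp]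

theorem mem_closedConvexHull_range_of_mean (m : lp (fun _ : α => ℝ) ∞ →ₗ[ℝ] ℝ)
    (hm_one : m 1 = 1) (hm_nonneg : ∀ f : lp (fun _ : α => ℝ) ∞, (∀ a, 0 ≤ f a) → 0 ≤ m f)
    (f : lp (fun _ : α => E) ∞) (x : E) (hx : ∀ L : StrongDual ℝ E, m (boundedComp L f) = L x) :
    x ∈ closedConvexHull ℝ (Set.range f) := by
  by_contra hmem
  obtain ⟨L, u, hxu, hu⟩ := geometric_hahn_banach_point_closed convex_closedConvexHull
    isClosed_closedConvexHull hmem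
  have h_nonneg : 0 ≤ m (boundedComp L f - u • 1) := hm_nonneg _ fun a => by
    rw [lp.coeFn_sub, Pi.sub_apply, lp.coeFn_smul, boundedComp_apply, sub_nonneg]
    simpa using (hu (f a) (subset_closedConvexHull ⟨a, rfl⟩)).le
  rw [map_sub, map_smul, hx, hm_one, smul_eq_mul, mul_one] at h_nonneg
  linarith

theorem mean_boundedComp_comp_sub_one_orbit {m : lp (fun _ : K => ℝ) ∞ →ₗ[ℝ] ℝ}
    (hm : ∀ (k : K) (f : lp (fun _ : K => ℝ) ∞), m (translInfty k f) = m f)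
    (π : K →* (E →L[ℝ] E)) {x : E} {orbit : lp (fun _ : K => E) ∞} (ho : ∀ k, orbit k = π k x)
    (L : StrongDual ℝ E) (h : K) : m (boundedComp (L ∘L (π h - 1)) orbit) = 0 := by
  have h_eq : boundedComp (L ∘L (π h - 1)) orbit =
      translInfty h⁻¹ (boundedComp L orbit) - boundedComp L orbit := by
    ext k
    rw [lp.coeFn_sub, Pi.sub_apply]
    simp [translInfty, ho]
  rw [h_eq, map_sub, hm, sub_self]

theorem IsAmenable.exists_mem_convexHull_orbit_norm_sub_lt (hK : IsAmenable K)
    (π : K →* (E →L[ℝ] E)) {x : E} (hx : BddAbove (Set.range fun k => ‖π k x‖)) (S : Finset K)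
    {ε : ℝ} (hε : 0 < ε) :
    ∃ p ∈ convexHull ℝ (Set.range fun k => π k x), ∀ h ∈ S, ‖π h p - p‖ < ε := by
  classical
  obtain ⟨m, hm_one, hm_nonneg, hm_inv⟩ := hK
  let orbit : lp (fun _ : K => E) ∞ := ⟨fun k => π k x, memℓp_infty hx⟩
  let T : E →L[ℝ] (S → E) := ContinuousLinearMap.pi fun h => π h - 1
  have hm_zero (L : StrongDual ℝ (S → E)) : m (boundedComp L (boundedComp T orbit)) = L 0 := by
    have h_sum : boundedComp L (boundedComp T orbit) =
        ∑ h : S, boundedComp ((L ∘L single ℝ (fun _ : S => E) h) ∘L (π h - 1)) orbit := by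
      ext k
      simp only [boundedComp_apply, lp.coeFn_sum, Finset.sum_apply]
      exact (sum_comp_single ℝ (fun _ : S => E) L _).symm
    rw [h_sum, map_sum, map_zero]
    exact Finset.sum_eq_zero fun h _ =>
      mean_boundedComp_comp_sub_one_orbit hm_inv π (x := x) (fun _ => rfl) _ _
  have h_mem : 0 ∈ closure (T '' convexHull ℝ (Set.range orbit)) := by
    have h := mem_closedConvexHull_range_of_mean m hm_one hm_nonneg _ 0 hm_zero
    have h_range : Set.range (boundedComp T orbit) = T '' Set.range orbit := by
      rw [← Set.range_comp]
      exact congrArg Set.range (funext (boundedComp_apply T orbit))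
    rwa [h_range, closedConvexHull_eq_closure_convexHull, ← T.coe_coe,
      ← LinearMap.image_convexHull] at h
  obtain ⟨_, ⟨p, hp, rfl⟩, hTp⟩ := Metric.mem_closure_iff.1 h_mem ε hε
  rw [dist_zero_left, pi_norm_lt_iff hε] at hTp
  exact ⟨p, hp, fun h hh => hTp ⟨h, hh⟩⟩

end AlmostFixedPoints

section Densities

variable {α : Type*}

variable (G) in
/-- The left regular representation of `G` on the real Banach space `ℓ¹(G)`. -/
def lregOne : G →* (lp (fun _ : G => ℝ) 1 →L[ℝ] lp (fun _ : G => ℝ) 1) where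
  toFun g := LinearMap.mkContinuous
    { toFun := fun f => ⟨fun x => f (g⁻¹ * x), memℓp_gen
        (((lp.memℓp f).summable (by simp)).comp_injective (mul_right_injective g⁻¹))⟩
      map_add' := fun _ _ => rfl
      map_smul' := fun _ _ => rfl } 1 fun f => by
    rw [one_mul, lp.norm_eq_tsum_rpow (by simp), lp.norm_eq_tsum_rpow (by simp)]
    exact (congrArg (· ^ _)
      ((Equiv.mulLeft g⁻¹).tsum_eq fun x => ‖f x‖ ^ (1 : ℝ≥0∞).toReal)).le
  map_one' := by
    ext f x
    simp
  map_mul' g h := by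
    ext f x
    change f ((g * h)⁻¹ * x) = f (h⁻¹ * (g⁻¹ * x))
    rw [mul_inv_rev, mul_assoc]

@[simp]
theorem lregOne_apply (g : G) (f : lp (fun _ : G => ℝ) 1) (x : G) :
    lregOne G g f x = f (g⁻¹ * x) :=
  rfl

theorem lregOne_single (g h : G) (c : ℝ) [DecidableEq G] :
    lregOne G g (lp.single 1 h c) = lp.single 1 (g * h) c := by
  ext x
  simp [lp.single_apply, Pi.single_apply, inv_mul_eq_iff_eq_mul]

/-- The probability densities on `α` that vanish outside `s`, as vectors of `ℓ¹(α)`. -/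
def densitiesOn (s : Set α) : Set (lp (fun _ : α => ℝ) 1) :=
  {p | (∀ x, 0 ≤ p x) ∧ (∀ x ∉ s, p x = 0) ∧ HasSum p 1}

theorem convex_densitiesOn (s : Set α) : Convex ℝ (densitiesOn s) := by
  rintro p ⟨hp, hps, hp_sum⟩ q ⟨hq, hqs, hq_sum⟩ a b ha hb hab
  have h_apply (x : α) : (a • p + b • q) x = a * p x + b * q x := rfl
  refine ⟨fun x => ?_, fun x hx => ?_, ?_⟩
  · exact add_nonneg (mul_nonneg ha (hp x)) (mul_nonneg hb (hq x))
  · rw [h_apply, hps x hx, hqs x hx, mul_zero, mul_zero, add_zero]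
  · have h_sum := (hp_sum.mul_left a).add (hq_sum.mul_left b)
    rw [mul_one, mul_one, hab] at h_sum
    exact h_sum

theorem single_one_mem_densitiesOn [DecidableEq α] {s : Set α} {a : α} (ha : a ∈ s) :
    lp.single 1 a (1 : ℝ) ∈ densitiesOn s := by
  refine ⟨fun x => ?_, fun x hx => ?_, ?_⟩
  · exact (Pi.single_nonneg (α := fun _ : α => ℝ)).2 zero_le_one x
  · exact lp.single_apply_ne 1 a _ fun h : x = a => hx (h ▸ ha)
  · exact hasSum_pi_single a (1 : ℝ)

theorem IsAmenable.exists_mem_densitiesOn_norm_sub_lt {H : Subgroup G} (hH : IsAmenable H)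
    (S : Finset H) {ε : ℝ} (hε : 0 < ε) :
    ∃ p ∈ densitiesOn (H : Set G), ∀ h ∈ S, ‖lregOne G h p - p‖ < ε := by
  classical
  let π := (lregOne G).comp H.subtype
  have h_orbit (k : H) : π k (lp.single 1 1 1) = lp.single 1 (k : G) 1 := by
    simp [π, lregOne_single]
  have h_bdd : BddAbove (Set.range fun k : H => ‖π k (lp.single 1 1 1)‖) :=
    ⟨1, by rintro _ ⟨k, rfl⟩; simp [h_orbit, lp.norm_single]⟩
  obtain ⟨p, hp, hpS⟩ := hH.exists_mem_convexHull_orbit_norm_sub_lt π h_bdd S hε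
  refine ⟨p, convexHull_min ?_ (convex_densitiesOn _) hp, hpS⟩
  rintro _ ⟨k, rfl⟩
  simpa only [h_orbit] using single_one_mem_densitiesOn k.2

end Densities

section SquareRoots

variable {α : Type*}

theorem sq_sqrt_sub_sqrt_le (a b : ℝ) : (√a - √b) ^ 2 ≤ |a - b| := by
  have h_abs : |√a - √b| ≤ |√a + √b| := by
    rw [abs_of_nonneg (add_nonneg a.sqrt_nonneg b.sqrt_nonneg), abs_le]
    constructor <;> linarith [a.sqrt_nonneg, b.sqrt_nonneg]
  calc (√a - √b) ^ 2 = |√a - √b| * |√a - √b| := by rw [abs_mul_abs_self, sq]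
    _ ≤ |√a + √b| * |√a - √b| := by gcongr
    _ = |max a 0 - max b 0| := by rw [← abs_mul, ← sq_sub_sq, Real.sq_sqrt', Real.sq_sqrt']
    _ ≤ |a - b| := abs_max_sub_max_le_abs a b 0

/-- The pointwise square root `√p`, which turns densities in `ℓ¹` into unit vectors of `ℓ²`. As
`Real.sqrt` vanishes on negative numbers, it is defined on all of `ℓ¹`. -/
def sqrtTwo (p : lp (fun _ : α => ℝ) 1) : ℓ²(α, ℂ) :=
  ⟨fun x => ((√(p x) : ℝ) : ℂ), memℓp_gen <| by
    refine ((lp.memℓp p).summable (by simp)).of_nonneg_of_le (fun x => by positivity) fun x => ?_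
    simpa using sq_sqrt_sub_sqrt_le (p x) 0⟩

@[simp]
theorem sqrtTwo_apply (p : lp (fun _ : α => ℝ) 1) (x : α) : sqrtTwo p x = (√(p x) : ℝ) :=
  rfl

theorem norm_sqrtTwo_sub_sq_le (p q : lp (fun _ : α => ℝ) 1) :
    ‖sqrtTwo p - sqrtTwo q‖ ^ 2 ≤ ‖p - q‖ := by
  have h_two := lp.hasSum_norm (by simp) (sqrtTwo p - sqrtTwo q)
  have h_one := lp.hasSum_norm (by simp) (p - q)
  simp only [ENNReal.toReal_ofNat, ENNReal.toReal_one, Real.rpow_ofNat, Real.rpow_one]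
    at h_two h_one
  refine hasSum_le (fun x => ?_) h_two h_one
  rw [lp.coeFn_sub, lp.coeFn_sub, Pi.sub_apply, Pi.sub_apply, sqrtTwo_apply, sqrtTwo_apply,
    ← Complex.ofReal_sub, Complex.norm_real, Real.norm_eq_abs, Real.norm_eq_abs, sq_abs]
  exact sq_sqrt_sub_sqrt_le (p x) (q x)

theorem norm_sqrtTwo_of_mem_densitiesOn {s : Set α} {p : lp (fun _ : α => ℝ) 1}
    (hp : p ∈ densitiesOn s) : ‖sqrtTwo p‖ = 1 := by
  obtain ⟨h_nonneg, -, h_sum⟩ := hp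
  have h_norm := lp.hasSum_norm (by simp) (sqrtTwo p)
  simp only [sqrtTwo_apply, Complex.norm_real, ENNReal.toReal_ofNat, Real.rpow_ofNat,
    Real.norm_eq_abs, sq_abs, Real.sq_sqrt (h_nonneg _)] at h_norm
  exact (pow_eq_one_iff_of_nonneg (norm_nonneg _) two_ne_zero).1 (h_norm.unique h_sum)

theorem lreg_apply (g : G) (ξ : ℓ²(G, ℂ)) (x : G) : lreg g ξ x = ξ (g⁻¹ * x) := by
  unfold lreg lregE
  rfl

theorem lreg_sqrtTwo (g : G) (p : lp (fun _ : G => ℝ) 1) :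
    lreg g (sqrtTwo p) = sqrtTwo (lregOne G g p) := by
  ext x
  simp [lreg_apply]

theorem IsAmenable.exists_norm_lreg_sub_lt {H : Subgroup G} (hH : IsAmenable H)
    (S : Finset H) {ε : ℝ} (hε : 0 < ε) :
    ∃ ξ : ℓ²(G, ℂ), ‖ξ‖ = 1 ∧ (∀ x ∉ H, ξ x = 0) ∧ ∀ h ∈ S, ‖lreg (h : G) ξ - ξ‖ < ε := by
  obtain ⟨p, hp, hpS⟩ := hH.exists_mem_densitiesOn_norm_sub_lt S (sq_pos_of_pos hε)
  refine ⟨sqrtTwo p, norm_sqrtTwo_of_mem_densitiesOn hp, fun x hx => ?_, fun h hh => ?_⟩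
  · simp [hp.2.1 x hx]
  · rw [lreg_sqrtTwo]
    exact lt_of_pow_lt_pow_left₀ 2 hε.le ((norm_sqrtTwo_sub_sq_le _ _).trans_lt (hpS h hh))

theorem inner_lreg_eq_zero {H : Subgroup G} {ξ : ℓ²(G, ℂ)} (hξ : ∀ x ∉ H, ξ x = 0) {g : G}
    (hg : g ∉ H) : inner ℂ ξ (lreg g ξ) = 0 := by
  rw [lp.inner_eq_tsum]
  refine (tsum_congr fun x => ?_).trans tsum_zero
  by_cases hx : x ∈ H
  · rw [lreg_apply, hξ (g⁻¹ * x), inner_zero_right]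
    rwa [H.mul_mem_cancel_right hx, inv_mem_iff]
  · rw [hξ x hx, inner_zero_left]

end SquareRoots

section VectorFunctionals

theorem norm_inner_sub_one_le {𝕜 E : Type*} [RCLike 𝕜] [SeminormedAddCommGroup E]
    [InnerProductSpace 𝕜 E] {ξ : E} (hξ : ‖ξ‖ = 1) (η : E) :
    ‖inner 𝕜 ξ η - 1‖ ≤ ‖η - ξ‖ := by
  have h_self : inner 𝕜 ξ ξ = 1 := by simp [inner_self_eq_norm_sq_to_K, hξ]
  rw [← h_self, ← inner_sub_right]
  simpa [hξ] using norm_inner_le_norm (𝕜 := 𝕜) ξ (η - ξ)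

theorem norm_inner_apply_self_le {𝕜 E : Type*} [RCLike 𝕜] [SeminormedAddCommGroup E]
    [InnerProductSpace 𝕜 E] (T : E →L[𝕜] E) (ξ : E) :
    ‖inner 𝕜 ξ (T ξ)‖ ≤ ‖ξ‖ ^ 2 * ‖T‖ :=
  calc ‖inner 𝕜 ξ (T ξ)‖ ≤ ‖ξ‖ * (‖T‖ * ‖ξ‖) := by grw [norm_inner_le_norm, T.le_opNorm ξ]
    _ = ‖ξ‖ ^ 2 * ‖T‖ := by ring

variable {E : Type*} [NormedAddCommGroup E] [InnerProductSpace ℂ E] [CompleteSpace E]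
  (A : StarSubalgebra ℂ (E →L[ℂ] E)) (ξ : E)

/-- The functional `a ↦ ⟪ξ, a ξ⟫` on a `*`-algebra of operators; for a unit vector `ξ` this is the
vector state of `ξ`. -/
def vectorFunctional : WeakDual ℂ A :=
  StrongDual.toWeakDual <| LinearMap.mkContinuous
    ((innerₛₗ ℂ ξ).comp ((LinearMap.applyₗ ξ).comp
      ((ContinuousLinearMap.coeLM ℂ).comp A.subtype.toLinearMap))) (‖ξ‖ ^ 2)
    fun a => norm_inner_apply_self_le (a : E →L[ℂ] E) ξ

@[simp]
theorem vectorFunctional_apply (a : A) :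
    vectorFunctional A ξ a = inner ℂ ξ ((a : E →L[ℂ] E) ξ) :=
  rfl

theorem norm_vectorFunctional_apply_le (a : A) : ‖vectorFunctional A ξ a‖ ≤ ‖ξ‖ ^ 2 * ‖a‖ :=
  norm_inner_apply_self_le (a : E →L[ℂ] E) ξ

theorem vectorFunctional_star_mul_self_nonneg (a : A) :
    0 ≤ vectorFunctional A ξ (star a * a) := by
  rw [vectorFunctional_apply, MulMemClass.coe_mul, StarMemClass.coe_star,
    ContinuousLinearMap.star_eq_adjoint, mul_apply_eq_comp,
    ContinuousLinearMap.adjoint_inner_right, inner_self_eq_norm_sq_to_K]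
  exact Complex.ofReal_pow ‖(a : E →L[ℂ] E) ξ‖ 2 ▸ Complex.zero_le_real.2 (sq_nonneg _)

end VectorFunctionals

section States

theorem mem_closure_of_forall_finset {ι X : Type*} [PseudoMetricSpace X] {C : Set (ι → X)}
    {f : ι → X} (hf : ∀ (S : Finset ι) (ε : ℝ), 0 < ε → ∃ f' ∈ C, ∀ i ∈ S, dist (f' i) (f i) < ε) :
    f ∈ closure C := by
  classical
  choose f' hf'C hf' using fun n : Finset ι × ℕ => hf n.1 (1 / (n.2 + 1)) Nat.one_div_pos_of_nat
  refine mem_closure_of_tendsto (b := Filter.atTop) (f := f') (tendsto_pi_nhds.2 fun i => ?_)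
    (Filter.Eventually.of_forall hf'C)
  refine Metric.tendsto_atTop.2 fun ε hε => ?_
  obtain ⟨N, hN⟩ := exists_nat_one_div_lt hε
  refine ⟨({i}, N), fun n hn => (hf' n i (hn.1 (Finset.mem_singleton_self i))).trans ?_⟩
  exact (Nat.one_div_le_one_div hn.2).trans_lt hN

theorem coe_uu (g : G) : (uu g : ℓ²(G, ℂ) →L[ℂ] ℓ²(G, ℂ)) = lreg g := by
  unfold uu
  rfl

variable (G) in
/-- The states on `C*_λ(G)` of norm at most `1`. Every state has norm `1`; the bound is imposed, not
derived from positivity, so that the Banach–Alaoglu theorem applies directly. -/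
def contractiveStates : Set (WeakDual ℂ (redCstar G)) :=
  {φ | IsState φ ∧ ∀ a, ‖φ a‖ ≤ ‖a‖}

theorem vectorFunctional_mem_contractiveStates {ξ : ℓ²(G, ℂ)} (hξ : ‖ξ‖ = 1) :
    vectorFunctional (redCstar G) ξ ∈ contractiveStates G := by
  refine ⟨⟨?_, vectorFunctional_star_mul_self_nonneg _ _⟩, fun a => ?_⟩
  · simp [inner_self_eq_norm_sq_to_K, hξ]
  · simpa [hξ] using norm_vectorFunctional_apply_le (redCstar G) ξ a

theorem isClosed_contractiveStates : IsClosed (contractiveStates G) := by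
  simp only [contractiveStates, IsState, Set.ofPred_and, Set.ofPred_forall]
  refine .inter (.inter ?_ (isClosed_iInter fun a => ?_)) (isClosed_iInter fun a => ?_)
  · exact isClosed_eq (WeakDual.eval_continuous 1) continuous_const
  · exact isClosed_le continuous_const (WeakDual.eval_continuous _)
  · exact isClosed_le (WeakDual.eval_continuous a).norm continuous_const

theorem isCompact_contractiveStates : IsCompact (contractiveStates G) := by
  refine (WeakDual.isCompact_closedBall (𝕜 := ℂ) (E := redCstar G) 0 1).of_isClosed_subset
    isClosed_contractiveStates fun φ hφ => ?_
  rw [Set.mem_preimage, mem_closedBall_zero_iff]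
  exact ContinuousLinearMap.opNorm_le_bound _ zero_le_one fun a => by simpa using hφ.2 a

theorem isClosed_image_coefficients_contractiveStates :
    IsClosed ((fun φ g => φ (uu g)) '' contractiveStates G : Set (G → ℂ)) :=
  (isCompact_contractiveStates.image <| continuous_pi fun g =>
    WeakDual.eval_continuous (𝕜 := ℂ) (E := redCstar G) (uu g)).isClosed

theorem IsAmenable.exists_state_dist_indicator_lt {H : Subgroup G} (hH : IsAmenable H)
    (S : Finset G) {ε : ℝ} (hε : 0 < ε) :
    ∃ φ ∈ contractiveStates G, ∀ g ∈ S, dist (φ (uu g)) ((H : Set G).indicator 1 g) < ε := by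
  classical
  obtain ⟨ξ, hξ, hξH, hξS⟩ := hH.exists_norm_lreg_sub_lt (S.subtype (· ∈ H)) hε
  refine ⟨_, vectorFunctional_mem_contractiveStates hξ, fun g hgS => ?_⟩
  have h_coeff : vectorFunctional (redCstar G) ξ (uu g) = inner ℂ ξ (lreg g ξ) := by
    rw [vectorFunctional_apply, coe_uu]
  rw [h_coeff]
  by_cases hg : g ∈ H
  · rw [Set.indicator_of_mem hg, Pi.one_apply, dist_eq_norm]
    exact (norm_inner_sub_one_le hξ _).trans_lt (hξS ⟨g, hg⟩ (Finset.mem_subtype.2 hgS))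
  · rwa [Set.indicator_of_notMem hg, inner_lreg_eq_zero hξH hg, dist_self]

end States

/-- If `H` is an amenable subgroup of `G`, then the indicator function of `H` extends to a
state on `C*_λ(G)`. -/
theorem exists_state_indicator_of_amenable_subgroup (G : Type u) [Group G]
    (H : Subgroup G) (hA : IsAmenable H) :
    ∃ φ : WeakDual ℂ (redCstar G), IsState φ ∧ (∀ g : G, g ∈ H → φ (uu g) = 1) ∧
      ∀ g : G, g ∉ H → φ (uu g) = 0 := by
  have h_closure : (H : Set G).indicator 1 ∈
      closure ((fun φ g => φ (uu g)) '' contractiveStates G : Set (G → ℂ)) :=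
    mem_closure_of_forall_finset fun S ε hε => by
      obtain ⟨φ, hφ, hφS⟩ := hA.exists_state_dist_indicator_lt S hε
      exact ⟨_, ⟨φ, hφ, rfl⟩, hφS⟩
  rw [isClosed_image_coefficients_contractiveStates.closure_eq] at h_closure
  obtain ⟨φ, hφ, h_indicator⟩ := h_closure
  refine ⟨φ, hφ.1, fun g hg => ?_, fun g hg => ?_⟩
  · exact (congrFun h_indicator g).trans (Set.indicator_of_mem hg 1)
  · exact (congrFun h_indicator g).trans (Set.indicator_of_notMem hg 1)
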